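/- arXiv:2110.02088 — 2 statements merged into one kernel-verified Lean document; each statement's English description precedes it below -/
import Mathlib

section
/- Let (x_i) be a sequence in ℝ^n converging to ξ, let p ≥ 1, and suppose there are constants 0 < k ≤ K and an index m such that for all i ≥ m: x_{i+1} ≠ x_i, the points x_i lie in the ball B(ξ; 1/2), and k‖x_{i+1} − x_i‖^p ≤ ‖x_{i+2} − x_{i+1}‖ ≤ K‖x_{i+1} − x_i‖^p. Then there exists δ_K > 0 such that the sequence of values P_i := log(‖x_i − x_{i−1}‖)/log(‖x_{i−1} − x_{i−2}‖) satisfies |P_i − p| ≤ δ_K for all i ≥ m + 2. -/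
open Filter Topology

/-! Divided by `log a < 0`, the logarithm of `k a ^ p ≤ b ≤ K a ^ p` reads
`p + log K / log a ≤ log b / log a ≤ p + log k / log a`, and both bounds tend to `p` as `a → 0⁺`.
Hence the estimates `P_i` converge to `p`, so they stay within a bounded distance of it. -/

section LogbComparison

variable {a b c p : ℝ}

lemma logb_mul_rpow (ha : 0 < a) (ha_ne_one : a ≠ 1) (hc : c ≠ 0) :
    Real.logb a (c * a ^ p) = p + Real.logb a c := by
  rw [Real.logb_mul hc (Real.rpow_pos_of_pos ha p).ne', Real.logb_rpow ha ha_ne_one, add_comm]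

lemma logb_le_add_logb_of_mul_rpow_le (ha : 0 < a) (ha_lt_one : a < 1) (hc : 0 < c)
    (h : c * a ^ p ≤ b) : Real.logb a b ≤ p + Real.logb a c := by
  have hcap : 0 < c * a ^ p := mul_pos hc (Real.rpow_pos_of_pos ha p)
  rw [← logb_mul_rpow ha ha_lt_one.ne hc.ne']
  exact (Real.logb_le_logb_of_base_lt_one ha ha_lt_one (hcap.trans_le h) hcap).2 h

lemma add_logb_le_logb_of_le_mul_rpow (ha : 0 < a) (ha_lt_one : a < 1) (hb : 0 < b)
    (h : b ≤ c * a ^ p) : p + Real.logb a c ≤ Real.logb a b := by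
  have hcap : 0 < c * a ^ p := hb.trans_le h
  have hc : 0 < c := pos_of_mul_pos_left hcap (Real.rpow_nonneg ha.le p)
  rw [← logb_mul_rpow ha ha_lt_one.ne hc.ne']
  exact (Real.logb_le_logb_of_base_lt_one ha ha_lt_one hcap hb).2 h

end LogbComparison

section LogbLimits

variable {ι : Type*} {l : Filter ι} {a b : ι → ℝ}

lemma tendsto_logb_base_nhdsGT_zero (ha : Tendsto a l (𝓝[>] 0)) (c : ℝ) :
    Tendsto (fun i => Real.logb (a i) c) l (𝓝 0) :=
  (Real.tendsto_log_nhdsGT_zero.comp ha).const_div_atBot (Real.log c)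

lemma tendsto_logb_of_mul_rpow_le_of_le_mul_rpow {p k K : ℝ} (ha : Tendsto a l (𝓝[>] 0))
    (hk : 0 < k) (hlower : ∀ᶠ i in l, k * a i ^ p ≤ b i)
    (hupper : ∀ᶠ i in l, b i ≤ K * a i ^ p) :
    Tendsto (fun i => Real.logb (a i) (b i)) l (𝓝 p) := by
  have tendsto_bound (c : ℝ) : Tendsto (fun i => p + Real.logb (a i) c) l (𝓝 p) := by
    simpa only [add_zero] using (tendsto_logb_base_nhdsGT_zero ha c).const_add p
  have ha_Ioo : ∀ᶠ i in l, a i ∈ Set.Ioo 0 1 := ha (Ioo_mem_nhdsGT one_pos)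
  refine tendsto_of_tendsto_of_tendsto_of_le_of_le' (tendsto_bound K) (tendsto_bound k) ?_ ?_
  · filter_upwards [ha_Ioo, hlower, hupper] with i ⟨ha_pos, ha_lt_one⟩ hlo hup
    have hb_pos : 0 < b i := (mul_pos hk (Real.rpow_pos_of_pos ha_pos p)).trans_le hlo
    exact add_logb_le_logb_of_le_mul_rpow ha_pos ha_lt_one hb_pos hup
  · filter_upwards [ha_Ioo, hlower] with i ⟨ha_pos, ha_lt_one⟩ hlo
    exact logb_le_add_logb_of_mul_rpow_le ha_pos ha_lt_one hk hlo

end LogbLimits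

lemma exists_pos_forall_dist_le_of_tendsto {X : Type*} [PseudoMetricSpace X] {u : ℕ → X} {y : X}
    (hu : Tendsto u atTop (𝓝 y)) : ∃ δ > 0, ∀ i, dist (u i) y ≤ δ := by
  obtain ⟨δ, hδ_pos, hδ⟩ := (Metric.isBounded_range_of_tendsto u hu).subset_closedBall_lt 0 y
  exact ⟨δ, hδ_pos, fun i => hδ (Set.mem_range_self i)⟩

lemma tendsto_dist_succ_nhdsGT_zero {X : Type*} [MetricSpace X] {x : ℕ → X} (hx : CauchySeq x)
    (hne : ∀ᶠ i in atTop, x (i + 1) ≠ x i) :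
    Tendsto (fun i => dist (x (i + 1)) (x i)) atTop (𝓝[>] 0) := by
  have succ_pair : Tendsto (fun i : ℕ => (i + 1, i)) atTop atTop :=
    prod_atTop_atTop_eq (α := ℕ) (β := ℕ) ▸ (tendsto_add_atTop_nat 1).prodMk tendsto_id
  exact tendsto_nhdsWithin_iff.2
    ⟨(cauchySeq_iff_tendsto_dist_atTop_0.1 hx).comp succ_pair, hne.mono fun _ h => dist_pos.2 h⟩

/-- The numerical estimate `P_i` of the order of convergence of the sequence `x`, computed from the
three points `x (i - 2)`, `x (i - 1)`, `x i`. Only the values at `i ≥ 2` are meaningful, since the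
subtraction of indices is truncated. -/
noncomputable def orderEstimate {X : Type*} [PseudoMetricSpace X] (x : ℕ → X) (i : ℕ) : ℝ :=
  Real.log (dist (x i) (x (i - 1))) / Real.log (dist (x (i - 1)) (x (i - 2)))

lemma orderEstimate_add_two {X : Type*} [PseudoMetricSpace X] (x : ℕ → X) (i : ℕ) :
    orderEstimate x (i + 2) =
      Real.logb (dist (x (i + 1)) (x i)) (dist (x (i + 2)) (x (i + 1))) :=
  rfl

theorem order_estimates_in_ball_of_two_sided_bound_general {X : Type*} [PseudoMetricSpace X]
    {x : ℕ → X} {p k K : ℝ}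
    (hstep : Tendsto (fun i => dist (x (i + 1)) (x i)) atTop (𝓝[>] 0)) (hk : 0 < k)
    (hlower : ∀ᶠ i in atTop, k * dist (x (i + 1)) (x i) ^ p ≤ dist (x (i + 2)) (x (i + 1)))
    (hupper : ∀ᶠ i in atTop, dist (x (i + 2)) (x (i + 1)) ≤ K * dist (x (i + 1)) (x i) ^ p) :
    Tendsto (orderEstimate x) atTop (𝓝 p) := by
  rw [← tendsto_add_atTop_iff_nat 2]
  simp only [orderEstimate_add_two]
  exact tendsto_logb_of_mul_rpow_le_of_le_mul_rpow hstep hk hlower hupper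

/-- If `(x_i)` converges to `ξ`, `p ≥ 1`, and there are `0 < k ≤ K` and an index
`m` such that for all `i ≥ m` we have `x_{i+1} ≠ x_i`, `x_i ∈ B(ξ; 1/2)` and
`k‖x_{i+1} − x_i‖^p ≤ ‖x_{i+2} − x_{i+1}‖ ≤ K‖x_{i+1} − x_i‖^p`, then there is `δ_K > 0`
such that `P_i := log(‖x_i − x_{i−1}‖)/log(‖x_{i−1} − x_{i−2}‖)` satisfies
`|P_i − p| ≤ δ_K` for all `i ≥ m + 2`. -/
theorem order_estimates_in_ball_of_two_sided_bound
    {n : ℕ} (x : ℕ → EuclideanSpace ℝ (Fin n)) (ξ : EuclideanSpace ℝ (Fin n))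
    (hlim : Tendsto x atTop (𝓝 ξ))
    (p : ℝ) (hp : 1 ≤ p) (k K : ℝ) (hk : 0 < k) (hkK : k ≤ K) (m : ℕ)
    (hne : ∀ i : ℕ, m ≤ i → x (i + 1) ≠ x i)
    (hball : ∀ i : ℕ, m ≤ i → x i ∈ Metric.ball ξ (1 / 2))
    (hlower : ∀ i : ℕ, m ≤ i → k * ‖x (i + 1) - x i‖ ^ p ≤ ‖x (i + 2) - x (i + 1)‖)
    (hupper : ∀ i : ℕ, m ≤ i → ‖x (i + 2) - x (i + 1)‖ ≤ K * ‖x (i + 1) - x i‖ ^ p) :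
    ∃ δK : ℝ, 0 < δK ∧ ∀ i : ℕ, m + 2 ≤ i →
      |Real.log ‖x i - x (i - 1)‖ / Real.log ‖x (i - 1) - x (i - 2)‖ - p| ≤ δK := by
  simp only [← dist_eq_norm] at hlower hupper ⊢
  have hP : Tendsto (orderEstimate x) atTop (𝓝 p) :=
    order_estimates_in_ball_of_two_sided_bound_general
      (tendsto_dist_succ_nhdsGT_zero hlim.cauchySeq (eventually_atTop.2 ⟨m, hne⟩)) hk
      (eventually_atTop.2 ⟨m, hlower⟩) (eventually_atTop.2 ⟨m, hupper⟩)
  obtain ⟨δ, hδ_pos, hδ⟩ := exists_pos_forall_dist_le_of_tendsto hP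
  exact ⟨δ, hδ_pos, fun i _ => hδ i⟩
end

section
/- Let (x_i) be a sequence in ℝ^n converging to ξ, let p ≥ 1, and suppose there are constants 0 < k ≤ K and an index m such that for all i ≥ m: x_{i+1} ≠ x_i, ‖x_{i+1} − x_i‖ < 1, and k‖x_{i+1} − x_i‖^p ≤ ‖x_{i+2} − x_{i+1}‖ ≤ K‖x_{i+1} − x_i‖^p. If in addition ‖x_{i+1} − x_i‖ → 0 as i → ∞, then the sequence P_i := log(‖x_i − x_{i−1}‖)/log(‖x_{i−1} − x_{i−2}‖) converges to p; in particular, for every ε > 0 there exists an index j ≥ m + 2 with |P_j − p| ≤ ε. -/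
open Filter Topology

open Asymptotics Real

/-!
Two quantities of the same order of magnitude have logarithms that differ by a bounded amount.
Applied to the distances `d (i + 1) = Θ(d i ^ p)`, this gives
`log (d (i + 1)) = p * log (d i) + O(1)`, and dividing by `log (d i) → -∞` kills the error.
-/

lemma log_sub_log_le_log {a b C : ℝ} (ha : 0 < a) (hb : 0 < b) (h : a ≤ C * b) :
    log a - log b ≤ log C := by
  rw [← log_div ha.ne' hb.ne']
  exact log_le_log (div_pos ha hb) ((div_le_iff₀ hb).mpr h)

lemma isBigO_one_log_norm_sub_log_norm_of_isTheta {α E F : Type*}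
    [SeminormedAddCommGroup E] [SeminormedAddCommGroup F] {l : Filter α} {f : α → E} {g : α → F}
    (hfg : f =Θ[l] g) :
    (fun i => log ‖f i‖ - log ‖g i‖) =O[l] (fun _ => (1 : ℝ)) := by
  obtain ⟨C, hC⟩ := hfg.isBigO.bound
  obtain ⟨D, hD⟩ := hfg.isBigO_symm.bound
  refine IsBigO.of_bound (max |log C| |log D|) ?_
  filter_upwards [hC, hD] with i hfg_le hgf_le
  rw [norm_one, mul_one, norm_eq_abs]
  rcases (norm_nonneg (f i)).eq_or_lt' with hf | hf
  · -- Both norms vanish here, and `log 0 = 0`.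
    have hg : ‖g i‖ = 0 := le_antisymm (by simpa only [hf, mul_zero] using hgf_le) (norm_nonneg _)
    simp [hf, hg]
  · have hg : 0 < ‖g i‖ := (norm_nonneg _).lt_of_ne' fun hg => by
      rw [hg, mul_zero] at hfg_le
      exact hf.not_ge hfg_le
    have upper := (log_sub_log_le_log hf hg hfg_le).trans (le_abs_self _)
    have lower := (log_sub_log_le_log hg hf hgf_le).trans (le_abs_self _)
    exact abs_sub_le_iff.mpr ⟨upper.trans (le_max_left _ _), lower.trans (le_max_right _ _)⟩

lemma tendsto_log_norm_div_log_of_isTheta_rpow {α E : Type*} [SeminormedAddCommGroup E]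
    {l : Filter α} {f : α → E} {u : α → ℝ} {p : ℝ} (hu : Tendsto u l (𝓝[>] 0))
    (hfu : f =Θ[l] fun i => u i ^ p) :
    Tendsto (fun i => log ‖f i‖ / log (u i)) l (𝓝 p) := by
  have hlog : Tendsto (fun i => log (u i)) l atBot := tendsto_log_nhdsGT_zero.comp hu
  have hone : (fun _ => (1 : ℝ)) =o[l] fun i => log (u i) :=
    (isLittleO_one_left_iff ℝ).mpr (tendsto_abs_atBot_atTop.comp hlog)
  have herror :
      Tendsto (fun i => (log ‖f i‖ - log ‖u i ^ p‖) / log (u i)) l (𝓝 0) :=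
    ((isBigO_one_log_norm_sub_log_norm_of_isTheta hfu).trans_isLittleO hone).tendsto_div_nhds_zero
  rw [← tendsto_sub_nhds_zero_iff]
  refine herror.congr' ?_
  filter_upwards [hu.eventually self_mem_nhdsWithin, hlog.eventually_ne_atBot 0] with i hui hlog_ne
  rw [norm_of_nonneg (rpow_nonneg hui.le p), log_rpow hui, sub_div, mul_div_cancel_right₀ _ hlog_ne]

theorem order_estimates_tendsto_order_of_convergence_general
    {X : Type*} [MetricSpace X] (x : ℕ → X) (p k K : ℝ) (hk : 0 < k) (m : ℕ)
    (hne : ∀ i : ℕ, m ≤ i → x (i + 1) ≠ x i)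
    (hlower : ∀ i : ℕ, m ≤ i →
      k * dist (x (i + 1)) (x i) ^ p ≤ dist (x (i + 2)) (x (i + 1)))
    (hupper : ∀ i : ℕ, m ≤ i →
      dist (x (i + 2)) (x (i + 1)) ≤ K * dist (x (i + 1)) (x i) ^ p)
    (hdiff0 : Tendsto (fun i : ℕ => dist (x (i + 1)) (x i)) atTop (𝓝 0)) :
    Tendsto
      (fun i : ℕ => log (dist (x i) (x (i - 1))) / log (dist (x (i - 1)) (x (i - 2))))
      atTop (𝓝 p) ∧
    ∀ ε : ℝ, 0 < ε → ∃ j : ℕ, m + 2 ≤ j ∧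
      |log (dist (x j) (x (j - 1))) / log (dist (x (j - 1)) (x (j - 2))) - p| ≤ ε := by
  have hpos : ∀ᶠ i in atTop, 0 < dist (x (i + 1)) (x i) :=
    eventually_atTop.mpr ⟨m, fun i hi => dist_pos.mpr (hne i hi)⟩
  have htheta : (fun i => dist (x (i + 2)) (x (i + 1))) =Θ[atTop]
      fun i => dist (x (i + 1)) (x i) ^ p := by
    refine ⟨.of_bound K ?_, .of_bound k⁻¹ ?_⟩ <;>
      filter_upwards [eventually_ge_atTop m] with i hi <;>
      rw [norm_of_nonneg dist_nonneg, norm_of_nonneg (rpow_nonneg dist_nonneg p)]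
    · exact hupper i hi
    · exact (le_inv_mul_iff₀ hk).mpr (hlower i hi)
  have hratio : Tendsto
      (fun i => log (dist (x i) (x (i - 1))) / log (dist (x (i - 1)) (x (i - 2))))
      atTop (𝓝 p) := by
    rw [← tendsto_add_atTop_iff_nat 2]
    change Tendsto (fun i => log (dist (x (i + 2)) (x (i + 1))) / log (dist (x (i + 1)) (x i)))
      atTop (𝓝 p)
    simpa only [norm_of_nonneg dist_nonneg] using tendsto_log_norm_div_log_of_isTheta_rpow
      (tendsto_nhdsWithin_iff.mpr ⟨hdiff0, hpos⟩) htheta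
  exact ⟨hratio, fun ε hε => ((eventually_ge_atTop (m + 2)).and
    (hratio.eventually (Metric.closedBall_mem_nhds p hε))).exists⟩

/-- If `(x_i)` converges to `ξ`, `p ≥ 1`, and there are `0 < k ≤ K` and an index
`m` such that for all `i ≥ m` we have `x_{i+1} ≠ x_i`, `‖x_{i+1} − x_i‖ < 1` and
`k‖x_{i+1} − x_i‖^p ≤ ‖x_{i+2} − x_{i+1}‖ ≤ K‖x_{i+1} − x_i‖^p`, and moreover
`‖x_{i+1} − x_i‖ → 0`, then `P_i := log(‖x_i − x_{i−1}‖)/log(‖x_{i−1} − x_{i−2}‖)`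
converges to `p`; in particular, for every `ε > 0` there is `j ≥ m + 2` with `|P_j − p| ≤ ε`. -/
theorem order_estimates_tendsto_order_of_convergence
    {n : ℕ} (x : ℕ → EuclideanSpace ℝ (Fin n)) (ξ : EuclideanSpace ℝ (Fin n))
    (hlim : Tendsto x atTop (𝓝 ξ))
    (p : ℝ) (hp : 1 ≤ p) (k K : ℝ) (hk : 0 < k) (hkK : k ≤ K) (m : ℕ)
    (hne : ∀ i : ℕ, m ≤ i → x (i + 1) ≠ x i)
    (hlt1 : ∀ i : ℕ, m ≤ i → ‖x (i + 1) - x i‖ < 1)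
    (hlower : ∀ i : ℕ, m ≤ i → k * ‖x (i + 1) - x i‖ ^ p ≤ ‖x (i + 2) - x (i + 1)‖)
    (hupper : ∀ i : ℕ, m ≤ i → ‖x (i + 2) - x (i + 1)‖ ≤ K * ‖x (i + 1) - x i‖ ^ p)
    (hdiff0 : Tendsto (fun i : ℕ => ‖x (i + 1) - x i‖) atTop (𝓝 0)) :
    Tendsto
      (fun i : ℕ => Real.log ‖x i - x (i - 1)‖ / Real.log ‖x (i - 1) - x (i - 2)‖)
      atTop (𝓝 p) ∧
    ∀ ε : ℝ, 0 < ε → ∃ j : ℕ, m + 2 ≤ j ∧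
      |Real.log ‖x j - x (j - 1)‖ / Real.log ‖x (j - 1) - x (j - 2)‖ - p| ≤ ε := by
  simp only [← dist_eq_norm] at hlower hupper hdiff0 ⊢
  exact order_estimates_tendsto_order_of_convergence_general x p k K hk m hne hlower hupper hdiff0
end
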